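/- arXiv:1111.5901 — 2 statements merged into one kernel-verified Lean document; each statement's English description precedes it below -/
import Mathlib

section
/- FO(<,◁) has the Crane Beach property: for every finite alphabet Σ, every language L ⊆ Σ* that has a neutral letter e ∈ Σ and is definable by a first-order sentence over word structures with built-in predicates < and ◁ is already definable by a first-order sentence over word structures with built-in predicate < only. That is, if there is a sentence φ over the language with binary relation symbols for < and ◁ and a unary symbol Q_σ for each σ ∈ Σ such that every nonempty word w satisfies w ∈ L iff the word structure of w models φ, then there is a sentence ψ over the language with only the binary relation symbol for < and the unary symbols Q_σ such that every nonempty word w satisfies w ∈ L iff the word structure of w models ψ. -/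
open FirstOrder Language

/-- `q_i = i(i+1)/2`, the smallest element of column `i`. -/
def qseq (i : ℕ) : ℕ := i * (i + 1) / 2

/-- `c(x)`, the column number of `x`: the largest `i` with `q_i ≤ x`. -/
def col (x : ℕ) : ℕ := Nat.findGreatest (fun i => qseq i ≤ x) x

/-- `q(x) = q_{c(x)}`, the bottom-most element of the column of `x`. -/
def qf (x : ℕ) : ℕ := qseq (col x)

/-- `r(x) = x - q(x)`, the row number of `x`. -/
def rowf (x : ℕ) : ℕ := x - qf x

/-- The row-major linear order `◁`. -/
def ordc (x y : ℕ) : Prop := rowf x < rowf y ∨ (rowf x = rowf y ∧ col x < col y)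

/-- Relation symbols of the word-structure language with built-in `<` and `◁`
and a unary letter predicate `Q_σ` for each letter `σ` of the alphabet `A`. -/
inductive WordRel (A : Type) : ℕ → Type
  | lt : WordRel A 2
  | ordc : WordRel A 2
  | letter : A → WordRel A 1

/-- The word-structure language with built-in predicates `<` and `◁`. -/
def LWord (A : Type) : Language := ⟨fun _ => Empty, WordRel A⟩

/-- Relation symbols of the word-structure language with built-in `<` only. -/
inductive WordRelLt (A : Type) : ℕ → Type
  | lt : WordRelLt A 2
  | letter : A → WordRelLt A 1

/-- The word-structure language with built-in predicate `<` only. -/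
def LWordLt (A : Type) : Language := ⟨fun _ => Empty, WordRelLt A⟩

/-- The word structure of a word `w`, with built-in predicates `<` and `◁`:
universe `{0,...,|w|-1}`, `Q_σ` interpreted as the positions carrying `σ`. -/
def wordStruct (A : Type) (w : List A) : (LWord A).Structure (Fin w.length) where
  funMap := fun f _ => f.elim
  RelMap := fun r v =>
    match r with
    | .lt => (v 0 : ℕ) < (v 1 : ℕ)
    | .ordc => ordc (v 0 : ℕ) (v 1 : ℕ)
    | .letter σ => w.get (v 0) = σ

/-- The word structure of a word `w`, with built-in predicate `<` only. -/
def wordStructLt (A : Type) (w : List A) : (LWordLt A).Structure (Fin w.length) where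
  funMap := fun f _ => f.elim
  RelMap := fun r v =>
    match r with
    | .lt => (v 0 : ℕ) < (v 1 : ℕ)
    | .letter σ => w.get (v 0) = σ

theorem qseq_succ (i : ℕ) : qseq (i + 1) = qseq i + (i + 1) := by
  unfold qseq
  have : (i + 1) * (i + 1 + 1) = i * (i + 1) + (i + 1) * 2 := by ring
  rw [this, Nat.add_mul_div_right _ _ (by norm_num)]

theorem qseq_mono : Monotone qseq :=
  monotone_nat_of_le_succ (fun n => by rw [qseq_succ]; omega)

theorem le_qseq (i : ℕ) : i ≤ qseq i := by
  induction i with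
  | zero => simp
  | succ n ih => rw [qseq_succ]; omega

theorem col_eq {c r : ℕ} (h : r ≤ c) : col (qseq c + r) = c := by
  unfold col
  rw [Nat.findGreatest_eq_iff]
  refine ⟨by have := le_qseq c; omega, fun _ => by omega, ?_⟩
  intro n hn _ h2
  have := qseq_mono (show c + 1 ≤ n from hn)
  rw [qseq_succ] at this
  omega

theorem rowf_eq {c r : ℕ} (h : r ≤ c) : rowf (qseq c + r) = r := by
  unfold rowf qf
  rw [col_eq h]; omega

theorem exists_enc (m x : ℕ) (h : x < qseq m) : ∃ c r, c < m ∧ r ≤ c ∧ x = qseq c + r := by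
  induction m with
  | zero => simp [qseq] at h
  | succ n ih =>
    by_cases hx : x < qseq n
    · obtain ⟨c, r, h1, h2, h3⟩ := ih hx
      exact ⟨c, r, by omega, h2, h3⟩
    · rw [qseq_succ] at h
      exact ⟨n, x - qseq n, by omega, by omega, by omega⟩

theorem enc_lt {m c r : ℕ} (hc : c < m) (hr : r ≤ c) : qseq c + r < qseq m := by
  have := qseq_mono (show c + 1 ≤ m from hc)
  rw [qseq_succ] at this
  omega

theorem neutral_replicate {A : Type} (L : Set (List A)) (e : A)
    (hneutral : ∀ w₁ w₂ : List A, w₁ ++ w₂ ∈ L ↔ w₁ ++ e :: w₂ ∈ L) (x t : List A) (k : ℕ) :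
    x ++ t ∈ L ↔ x ++ (List.replicate k e ++ t) ∈ L := by
  induction k with
  | zero => simp
  | succ k ih => rw [ih, hneutral]; simp [List.replicate_succ]

/-- `w'` is the padding of `w`: letters of `w` on row zero, neutral letters elsewhere. -/
def IsPad {A : Type} (e : A) (w w' : List A) : Prop :=
  w'.length = qseq w.length ∧
    ∀ c r, c < w.length → r ≤ c → w'[qseq c + r]? = if r = 0 then w[c]? else some e

theorem exists_pad {A : Type} (L : Set (List A)) (e : A)
    (hneutral : ∀ w₁ w₂ : List A, w₁ ++ w₂ ∈ L ↔ w₁ ++ e :: w₂ ∈ L) (w : List A) :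
    ∃ w', IsPad e w w' ∧ ∀ t, (w ++ t ∈ L ↔ w' ++ t ∈ L) := by
  induction w using List.reverseRecOn with
  | nil => exact ⟨[], ⟨by simp [qseq], by simp⟩, by simp⟩
  | append_singleton w a ih =>
    obtain ⟨w', ⟨h1, h2⟩, h3⟩ := ih
    refine ⟨w' ++ a :: List.replicate w.length e, ⟨?_, ?_⟩, ?_⟩
    · simp [h1, qseq_succ]
    · intro c r hc hr
      simp only [List.length_append, List.length_singleton] at hc
      by_cases hcw : c < w.length
      · rw [List.getElem?_append_left (by rw [h1]; exact enc_lt hcw hr), h2 c r hcw hr,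
          List.getElem?_append_left hcw]
      · obtain rfl : c = w.length := by omega
        rw [List.getElem?_append_right (by omega), h1, Nat.add_sub_cancel_left]
        cases r with
        | zero => simp
        | succ r =>
          simp only [List.getElem?_cons_succ]
          rw [List.getElem?_replicate, if_pos (by omega)]
          simp
    · intro t
      have h4 := neutral_replicate L e hneutral (w' ++ [a]) t w.length
      have h5 := h3 (a :: t)
      simp only [List.append_assoc, List.cons_append, List.nil_append] at h4 h5 ⊢
      rw [h5, h4]

/-- The realization relation in `wordStruct`. -/
def RealW {A : Type} (w : List A) {n : ℕ} (φ : (LWord A).BoundedFormula Empty n)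
    (v : Fin n → Fin w.length) : Prop :=
  letI := wordStruct A w
  φ.Realize (Empty.elim : Empty → Fin w.length) v

/-- The realization relation in `wordStructLt`. -/
def RealLt {A : Type} (w : List A) {n : ℕ} (φ : (LWordLt A).BoundedFormula Empty n)
    (v : Fin n → Fin w.length) : Prop :=
  letI := wordStructLt A w
  φ.Realize (Empty.elim : Empty → Fin w.length) v

/-- index of the column variable -/
def ci {n : ℕ} (i : Fin n) : Fin (2 * n) := ⟨2 * i, by omega⟩
/-- index of the row variable -/
def ri {n : ℕ} (i : Fin n) : Fin (2 * n) := ⟨2 * i + 1, by omega⟩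

/-- `u` encodes the valuation `v` by column-row pairs. -/
def Enc {m m' n : ℕ} (v : Fin n → Fin m') (u : Fin (2 * n) → Fin m) : Prop :=
  ∀ i, (v i : ℕ) = qseq (u (ci i)) + (u (ri i) : ℕ) ∧ (u (ri i) : ℕ) ≤ u (ci i)

/-- The formula `x_i < x_j`. -/
def ltF {A : Type} {n : ℕ} (i j : Fin n) : (LWordLt A).BoundedFormula Empty n :=
  Relations.boundedFormula₂ (L := LWordLt A) (WordRelLt.lt : (LWordLt A).Relations 2)
    (Term.var (Sum.inr i)) (Term.var (Sum.inr j))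

/-- The formula `Q_σ(x_i)`. -/
def letF {A : Type} {n : ℕ} (a : A) (i : Fin n) : (LWordLt A).BoundedFormula Empty n :=
  Relations.boundedFormula₁ (L := LWordLt A) (WordRelLt.letter a : (LWordLt A).Relations 1)
    (Term.var (Sum.inr i))

/-- The formula `x_i = x_j`. -/
def eqF {A : Type} {n : ℕ} (i j : Fin n) : (LWordLt A).BoundedFormula Empty n :=
  Term.bdEqual (Term.var (Sum.inr i)) (Term.var (Sum.inr j))

section
variable {A : Type} (w : List A) {n : ℕ} (v : Fin n → Fin w.length)

theorem real_ltF (i j : Fin n) : RealLt w (ltF i j) v ↔ (v i : ℕ) < v j := Iff.rfl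

theorem real_letF (a : A) (i : Fin n) : RealLt w (letF a i) v ↔ w.get (v i) = a := Iff.rfl

theorem real_eqF (i j : Fin n) : RealLt w (eqF i j) v ↔ (v i : ℕ) = v j := by
  letI := wordStructLt A w
  unfold RealLt eqF
  rw [BoundedFormula.realize_bdEqual, ← Fin.ext_iff]
  rfl

theorem real_imp (f g : (LWordLt A).BoundedFormula Empty n) :
    RealLt w (f.imp g) v ↔ (RealLt w f v → RealLt w g v) := Iff.rfl

theorem real_bot : RealLt w ⊥ v ↔ False := Iff.rfl

theorem real_not (f : (LWordLt A).BoundedFormula Empty n) :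
    RealLt w f.not v ↔ ¬ RealLt w f v := Iff.rfl

theorem real_inf (f g : (LWordLt A).BoundedFormula Empty n) :
    RealLt w (f ⊓ g) v ↔ (RealLt w f v ∧ RealLt w g v) := by
  letI := wordStructLt A w
  exact BoundedFormula.realize_inf

theorem real_sup (f g : (LWordLt A).BoundedFormula Empty n) :
    RealLt w (f ⊔ g) v ↔ (RealLt w f v ∨ RealLt w g v) := by
  letI := wordStructLt A w
  exact BoundedFormula.realize_sup

theorem real_all (f : (LWordLt A).BoundedFormula Empty (n + 1)) :
    RealLt w f.all v ↔ ∀ x, RealLt w f (Fin.snoc v x) := Iff.rfl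

/-- The formula `x_i = 0`. -/
def zeroF (i : Fin n) : (LWordLt A).BoundedFormula Empty n :=
  (ltF (Fin.last n) i.castSucc).not.all

theorem real_zeroF (i : Fin n) : RealLt w (zeroF i) v ↔ (v i : ℕ) = 0 := by
  unfold zeroF
  rw [real_all]
  simp only [real_not, real_ltF, Fin.snoc_last, Fin.snoc_castSucc]
  constructor
  · intro h
    have := h ⟨0, by have := (v i).2; omega⟩
    simpa using this
  · intro h x
    omega

end

theorem term_var {A : Type} {n : ℕ} (t : (LWord A).Term (Empty ⊕ Fin n)) :
    ∃ i, t = Term.var (Sum.inr i) := by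
  cases t with
  | var x =>
    cases x with
    | inl x => exact x.elim
    | inr i => exact ⟨i, rfl⟩
  | func f _ => exact (f : Empty).elim

theorem enc_facts {m m' n : ℕ} {v : Fin n → Fin m'} {u : Fin (2 * n) → Fin m} (h : Enc v u)
    (i : Fin n) : col (v i) = u (ci i) ∧ rowf (v i) = u (ri i) := by
  obtain ⟨h1, h2⟩ := h i
  rw [h1]
  exact ⟨col_eq h2, rowf_eq h2⟩

theorem enc_lt_iff {c r c' r' : ℕ} (h : r ≤ c) (h' : r' ≤ c') :
    qseq c + r < qseq c' + r' ↔ c < c' ∨ (c = c' ∧ r < r') := by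
  rcases lt_trichotomy c c' with hc | hc | hc
  · have := enc_lt hc h
    simp only [hc, true_or, iff_true]; omega
  · subst hc; simp
  · have := enc_lt hc h'
    constructor <;> intro <;> omega

theorem enc_snoc {m m' n : ℕ} {v : Fin n → Fin m'} {u : Fin (2 * n) → Fin m} (h : Enc v u)
    (x : Fin m') (c r : Fin m) (hx : (x : ℕ) = qseq c + r) (hr : (r : ℕ) ≤ c) :
    Enc (n := n + 1) (Fin.snoc v x : Fin (n + 1) → Fin m')
      (Fin.snoc (Fin.snoc u c : Fin (2 * n + 1) → Fin m) r : Fin (2 * n + 1 + 1) → Fin m) := by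
  intro i
  have e1 : ∀ i : Fin n, (ci i.castSucc : Fin (2 * n + 1 + 1)) = (ci i).castSucc.castSucc :=
    fun _ => rfl
  have e2 : ∀ i : Fin n, (ri i.castSucc : Fin (2 * n + 1 + 1)) = (ri i).castSucc.castSucc :=
    fun _ => rfl
  have e3 : (ci (Fin.last n) : Fin (2 * n + 1 + 1)) = (Fin.last (2 * n)).castSucc := rfl
  have e4 : (ri (Fin.last n) : Fin (2 * n + 1 + 1)) = Fin.last (2 * n + 1) := rfl
  induction i using Fin.lastCases with
  | last =>
    rw [e3, e4]
    simp only [Fin.snoc_last, Fin.snoc_castSucc]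
    exact ⟨hx, hr⟩
  | cast i =>
    rw [e1, e2]
    simp only [Fin.snoc_castSucc]
    exact h i

theorem translate_word {A : Type} (e : A) {n : ℕ} (φ : (LWord A).BoundedFormula Empty n) :
    ∃ ψ : (LWordLt A).BoundedFormula Empty (2 * n), ∀ w w' : List A, IsPad e w w' →
      ∀ (v : Fin n → Fin w'.length) (u : Fin (2 * n) → Fin w.length), Enc v u →
        (RealW w' φ v ↔ RealLt w ψ u) := by
  induction φ with
  | falsum => exact ⟨⊥, fun _ _ _ _ _ _ => Iff.rfl⟩
  | @equal n t₁ t₂ =>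
    obtain ⟨i, rfl⟩ := term_var t₁
    obtain ⟨j, rfl⟩ := term_var t₂
    refine ⟨eqF (ci i) (ci j) ⊓ eqF (ri i) (ri j), fun w w' hw v u h => ?_⟩
    rw [real_inf, real_eqF, real_eqF]
    have : RealW w' (BoundedFormula.equal (Term.var (Sum.inr i)) (Term.var (Sum.inr j))) v ↔
      v i = v j := Iff.rfl
    rw [this, ← (enc_facts h i).1, ← (enc_facts h i).2, ← (enc_facts h j).1,
      ← (enc_facts h j).2, Fin.ext_iff]
    refine ⟨fun h => by rw [h]; simp, fun h' => ?_⟩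
    rw [(h i).1, (h j).1, ← (enc_facts h i).1, ← (enc_facts h i).2, ← (enc_facts h j).1,
      ← (enc_facts h j).2, h'.1, h'.2]
  | @rel n l R ts =>
    cases R with
    | lt =>
      obtain ⟨i, hi⟩ := term_var (ts 0)
      obtain ⟨j, hj⟩ := term_var (ts 1)
      refine ⟨ltF (ci i) (ci j) ⊔ (eqF (ci i) (ci j) ⊓ ltF (ri i) (ri j)),
        fun w w' hw v u h => ?_⟩
      rw [real_sup, real_inf, real_eqF, real_ltF, real_ltF, ← enc_lt_iff (h i).2 (h j).2,
        ← (h i).1, ← (h j).1]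
      letI := wordStruct A w'
      change (((ts 0).realize (Sum.elim Empty.elim v) : Fin w'.length) : ℕ) <
        (((ts 1).realize (Sum.elim Empty.elim v) : Fin w'.length) : ℕ) ↔ _
      rw [hi, hj]; rfl
    | ordc =>
      obtain ⟨i, hi⟩ := term_var (ts 0)
      obtain ⟨j, hj⟩ := term_var (ts 1)
      refine ⟨ltF (ri i) (ri j) ⊔ (eqF (ri i) (ri j) ⊓ ltF (ci i) (ci j)),
        fun w w' hw v u h => ?_⟩
      rw [real_sup, real_inf, real_eqF, real_ltF, real_ltF, ← (enc_facts h i).1,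
        ← (enc_facts h i).2, ← (enc_facts h j).1, ← (enc_facts h j).2]
      letI := wordStruct A w'
      change ordc (((ts 0).realize (Sum.elim Empty.elim v) : Fin w'.length) : ℕ)
        (((ts 1).realize (Sum.elim Empty.elim v) : Fin w'.length) : ℕ) ↔ _
      rw [hi, hj]; rfl
    | letter a =>
      obtain ⟨i, hi⟩ := term_var (ts 0)
      refine ⟨(zeroF (ri i) ⊓ letF a (ci i)) ⊔
        ((zeroF (ri i)).not ⊓ (letI := Classical.dec (e = a); if e = a then BoundedFormula.not ⊥ else ⊥)),
        fun w w' hw v u h => ?_⟩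
      rw [real_sup, real_inf, real_inf, real_not, real_zeroF, real_letF]
      letI := wordStruct A w'
      have h0 : RealW w' (BoundedFormula.rel (WordRel.letter a : (LWord A).Relations 1) ts) v ↔
          w'.get (v i) = a := by
        change w'.get ((ts 0).realize (Sum.elim Empty.elim v)) = a ↔ _
        rw [hi]; rfl
      have h1 : w'.get (v i) = a ↔ w'[(v i : ℕ)]? = some a := by
        simp
      rw [h0, h1, (h i).1, hw.2 _ _ (u (ci i)).2 (h i).2]
      by_cases hz : (u (ri i) : ℕ) = 0
      · simp [hz]
      · by_cases ha : e = a
        · simp [hz, ha, real_not, real_bot]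
        · simp [hz, ha, real_bot]
  | imp f g ihf ihg =>
    obtain ⟨f', hf⟩ := ihf
    obtain ⟨g', hg⟩ := ihg
    refine ⟨f'.imp g', fun w w' hw v u h => ?_⟩
    rw [real_imp, ← hf w w' hw v u h, ← hg w w' hw v u h]
    rfl
  | @all n f ih =>
    obtain ⟨f', hf⟩ := ih
    refine ⟨BoundedFormula.all (BoundedFormula.all (n := 2 * n + 1)
      ((ltF (Fin.last (2 * n)).castSucc (Fin.last (2 * n + 1))).not.imp f')),
      fun w w' hw v u h => ?_⟩
    rw [real_all]
    have h0 : RealW w' f.all v ↔ ∀ x, RealW w' f (Fin.snoc v x) := Iff.rfl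
    rw [h0]
    simp only [real_all]
    constructor
    · intro H c r
      rw [real_imp, real_not, real_ltF]
      simp only [Fin.snoc_last, Fin.snoc_castSucc]
      intro hr
      have hr : (r : ℕ) ≤ c := by omega
      have hx : qseq c + r < w'.length := by rw [hw.1]; exact enc_lt c.2 hr
      exact (hf w w' hw _ _ (enc_snoc h ⟨_, hx⟩ c r rfl hr)).1 (H _)
    · intro H x
      obtain ⟨c, r, hc, hr, hx⟩ := exists_enc w.length x (by rw [← hw.1]; exact x.2)
      have H' := H ⟨c, hc⟩ ⟨r, by omega⟩
      rw [real_imp, real_not, real_ltF] at H'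
      simp only [Fin.snoc_last, Fin.snoc_castSucc] at H'
      exact (hf w w' hw _ _ (enc_snoc h x ⟨c, hc⟩ ⟨r, by omega⟩ hx hr)).2 (H' (by omega))

/-- Theorem 4.1, main step: `FO(<,◁)` has the Crane Beach property.
If a language `L` over a finite alphabet has a neutral letter `e` and is defined by an
`FO(<,◁)`-sentence `φ` on word structures, then it is defined by an `FO(<)`-sentence. -/
theorem craneBeach_lt_ordc (A : Type) [Fintype A] (L : Set (List A)) (e : A)
    (hneutral : ∀ w₁ w₂ : List A, w₁ ++ w₂ ∈ L ↔ w₁ ++ e :: w₂ ∈ L)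
    (φ : (LWord A).Sentence)
    (hφ : ∀ w : List A, w ≠ [] →
      (w ∈ L ↔ (letI := wordStruct A w; Fin w.length ⊨ φ))) :
    ∃ ψ : (LWordLt A).Sentence, ∀ w : List A, w ≠ [] →
      (w ∈ L ↔ (letI := wordStructLt A w; Fin w.length ⊨ ψ)) := by
  obtain ⟨ψ, hψ⟩ := translate_word e (n := 0) φ
  refine ⟨ψ, fun w hw => ?_⟩
  obtain ⟨w', hp, hL⟩ := exists_pad L e hneutral w
  have hL' := hL []
  simp only [List.append_nil] at hL'
  have hw' : w' ≠ [] := by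
    intro h0
    have h1 := hp.1
    have h2 := le_qseq w.length
    have h3 := List.length_pos_iff.2 hw
    rw [h0] at h1
    simp only [List.length_nil] at h1
    omega
  rw [hL', hφ w' hw']
  have key := hψ w w' hp Fin.elim0 Fin.elim0 (fun i => i.elim0)
  have a1 : RealW w' (n := 0) φ Fin.elim0 ↔ (letI := wordStruct A w'; Fin w'.length ⊨ φ) := by
    unfold RealW Sentence.Realize Formula.Realize
    simp only [Subsingleton.elim (Empty.elim : Empty → Fin w'.length) default,
      Subsingleton.elim (Fin.elim0 : Fin 0 → Fin w'.length) default]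
  have a2 : RealLt w (n := 0) ψ Fin.elim0 ↔
      (letI := wordStructLt A w; Fin w.length ⊨ (ψ : (LWordLt A).Sentence)) := by
    unfold RealLt Sentence.Realize Formula.Realize
    simp only [Subsingleton.elim (Empty.elim : Empty → Fin w.length) default,
      Subsingleton.elim (Fin.elim0 : Fin 0 → Fin w.length) default]
  exact a1.symm.trans (key.trans a2)
end

section
/- There exists a strict linear order ◁' on ℕ such that FO(<,◁') and FO(Bit) define the same relations in every finite prefix; concretely: the relation Bit is FO(<,◁')-definable in every finite prefix, and conversely both < and ◁' are FO(Bit)-definable in every finite prefix. -/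
open FirstOrder Language


/-- Relation symbols of the language with a single binary relation `Bit`. -/
inductive BitRel : ℕ → Type
  | bit : BitRel 2

/-- The language with a single binary relation symbol for `Bit`. -/
def LBit : Language := ⟨fun _ => Empty, BitRel⟩

/-- The finite prefix structure `({0,...,n}, Bit)`. -/
def bitStruct (n : ℕ) : LBit.Structure (Fin (n + 1)) where
  funMap := fun f _ => f.elim
  RelMap := fun r v =>
    match r with
    | .bit => Nat.testBit (v 0 : ℕ) (v 1 : ℕ) = true

/-- Relation symbols of a language with two binary relation symbols. -/
inductive RelPair : ℕ → Type
  | lt : RelPair 2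
  | snd : RelPair 2

/-- A language with two binary relation symbols: one for `<` and one further one. -/
def LPair : Language := ⟨fun _ => Empty, RelPair⟩

/-- The finite prefix structure `({0,...,n}, <, R)`, interpreting the first symbol by
the standard order `<` and the second one by the binary relation `R`. -/
def pairStruct (R : ℕ → ℕ → Prop) (n : ℕ) : LPair.Structure (Fin (n + 1)) where
  funMap := fun f _ => f.elim
  RelMap := fun r v =>
    match r with
    | .lt => (v 0 : ℕ) < (v 1 : ℕ)
    | .snd => R (v 0 : ℕ) (v 1 : ℕ)

/-! ## A small calculus of uniformly definable relations -/

section Calculus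

variable {L : FirstOrder.Language.{0, 0}}

/-- `R` is defined by a single formula in all structures of the family `S`. -/
def UDef (S : ∀ n : ℕ, L.Structure (Fin (n + 1))) (α : Type)
    (R : ℕ → (α → ℕ) → Prop) : Prop :=
  ∃ φ : L.Formula α, ∀ n : ℕ, ∀ v : α → Fin (n + 1),
    (letI := S n; φ.Realize v) ↔ R n (fun i => (v i : ℕ))

variable {S : ∀ n : ℕ, L.Structure (Fin (n + 1))} {α : Type}

theorem UDef.congr {R R' : ℕ → (α → ℕ) → Prop} (h : UDef S α R)
    (hh : ∀ n v, (∀ i, v i ≤ n) → (R n v ↔ R' n v)) : UDef S α R' := by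
  obtain ⟨φ, hφ⟩ := h
  exact ⟨φ, fun n v => (hφ n v).trans (hh n _ fun i => Nat.lt_succ_iff.mp (v i).2)⟩

theorem UDef.not {R : ℕ → (α → ℕ) → Prop} (h : UDef S α R) :
    UDef S α (fun n v => ¬ R n v) := by
  obtain ⟨φ, hφ⟩ := h
  refine ⟨φ.not, fun n v => ?_⟩
  letI := S n
  exact (Formula.realize_not).trans (not_congr (hφ n v))

theorem UDef.imp {R R' : ℕ → (α → ℕ) → Prop} (h : UDef S α R) (h' : UDef S α R') :
    UDef S α (fun n v => R n v → R' n v) := by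
  obtain ⟨φ, hφ⟩ := h
  obtain ⟨ψ, hψ⟩ := h'
  refine ⟨φ.imp ψ, fun n v => ?_⟩
  letI := S n
  exact (Formula.realize_imp).trans (imp_congr (hφ n v) (hψ n v))

theorem UDef.and {R R' : ℕ → (α → ℕ) → Prop} (h : UDef S α R) (h' : UDef S α R') :
    UDef S α (fun n v => R n v ∧ R' n v) := by
  refine (h.imp h'.not).not.congr fun n v _ => ?_
  tauto

theorem UDef.or {R R' : ℕ → (α → ℕ) → Prop} (h : UDef S α R) (h' : UDef S α R') :
    UDef S α (fun n v => R n v ∨ R' n v) := by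
  refine (h.not.imp h').congr fun n v _ => ?_
  tauto

theorem UDef.iff {R R' : ℕ → (α → ℕ) → Prop} (h : UDef S α R) (h' : UDef S α R') :
    UDef S α (fun n v => (R n v ↔ R' n v)) := by
  refine ((h.imp h').and (h'.imp h)).congr fun n v _ => ?_
  tauto

theorem UDef.ex {R : ℕ → (α → ℕ) → ℕ → Prop}
    (h : UDef S (α ⊕ Unit) (fun n w => R n (fun a => w (Sum.inl a)) (w (Sum.inr ())))) :
    UDef S α (fun n v => ∃ x, x ≤ n ∧ R n v x) := by
  obtain ⟨φ, hφ⟩ := h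
  refine ⟨φ.iExs Unit, fun n v => ?_⟩
  letI := S n
  refine (Formula.realize_iExs).trans ⟨?_, ?_⟩
  · rintro ⟨i, hi⟩
    exact ⟨i (), Nat.lt_succ_iff.mp (i ()).2, (hφ n _).mp hi⟩
  · rintro ⟨x, hx, hR⟩
    exact ⟨fun _ => ⟨x, Nat.lt_succ_iff.mpr hx⟩, (hφ n _).mpr hR⟩

theorem UDef.all {R : ℕ → (α → ℕ) → ℕ → Prop}
    (h : UDef S (α ⊕ Unit) (fun n w => R n (fun a => w (Sum.inl a)) (w (Sum.inr ())))) :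
    UDef S α (fun n v => ∀ x, x ≤ n → R n v x) := by
  refine (UDef.ex (R := fun n v x => ¬ R n v x) h.not).not.congr fun n v _ => ?_
  push Not
  rfl

theorem UDef.eq (i j : α) : UDef S α (fun _ v => v i = v j) := by
  refine ⟨Term.equal (Term.var i) (Term.var j), fun n v => ?_⟩
  letI := S n
  refine (Formula.realize_equal).trans ?_
  simp [Fin.ext_iff]

/-- A binary relation (depending on the size) is definable at all pairs of variables. -/
def UDef₂ (S : ∀ n : ℕ, L.Structure (Fin (n + 1))) (R : ℕ → ℕ → ℕ → Prop) : Prop :=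
  ∀ (α : Type) (i j : α), UDef S α (fun n v => R n (v i) (v j))

/-- A unary relation (depending on the size) is definable at all variables. -/
def UDef₁ (S : ∀ n : ℕ, L.Structure (Fin (n + 1))) (R : ℕ → ℕ → Prop) : Prop :=
  ∀ (α : Type) (i : α), UDef S α (fun n v => R n (v i))

theorem UDef₂.formula {R : ℕ → ℕ → ℕ → Prop} (h : UDef₂ S R) :
    ∃ φ : L.Formula (Fin 2), ∀ n : ℕ, letI := S n
      ∀ a b : Fin (n + 1), φ.Realize ![a, b] ↔ R n a b := by
  obtain ⟨φ, hφ⟩ := h (Fin 2) 0 1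
  exact ⟨φ, fun n a b => hφ n ![a, b]⟩

theorem UDef₂.congr {R R' : ℕ → ℕ → ℕ → Prop} (h : UDef₂ S R)
    (hh : ∀ n a b, a ≤ n → b ≤ n → (R n a b ↔ R' n a b)) : UDef₂ S R' :=
  fun α i j => (h α i j).congr fun n _ hv => hh n _ _ (hv i) (hv j)

theorem UDef₁.congr {R R' : ℕ → ℕ → Prop} (h : UDef₁ S R)
    (hh : ∀ n a, a ≤ n → (R n a ↔ R' n a)) : UDef₁ S R' :=
  fun α i => (h α i).congr fun n _ hv => hh n _ (hv i)

theorem UDef₂.of_rel {R : ℕ → ℕ → ℕ → Prop} (r : L.Relations 2)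
    (hr : ∀ n (w : Fin 2 → Fin (n + 1)), (letI := S n; Structure.RelMap r w) ↔ R n (w 0) (w 1)) :
    UDef₂ S R := by
  intro α i j
  refine ⟨r.formula₂ (Term.var i) (Term.var j), fun n v => ?_⟩
  letI := S n
  refine (Formula.realize_rel₂).trans ?_
  exact hr n _

end Calculus

/-! ## Semantics: bits and the order -/

theorem lt_of_bit {a i : ℕ} (h : a.testBit i = true) : i < a :=
  lt_of_lt_of_le Nat.lt_two_pow_self (Nat.ge_two_pow_of_testBit h)

theorem exists_top_diff {x y : ℕ} (h : y < x) :
    ∃ z, x.testBit z = true ∧ ¬ y.testBit z = true ∧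
      ∀ j, z < j → y.testBit j = x.testBit j := by
  have hne : x ^^^ y ≠ 0 := by
    intro h0
    rw [Nat.xor_eq_zero_iff] at h0
    omega
  obtain ⟨i, hi, hj⟩ := Nat.exists_most_significant_bit hne
  have agree : ∀ j, i < j → y.testBit j = x.testBit j := by
    intro j hij
    have := hj j hij
    rw [Nat.testBit_xor] at this
    revert this
    cases x.testBit j <;> cases y.testBit j <;> simp
  rw [Nat.testBit_xor] at hi
  refine ⟨i, ?_, ?_, agree⟩ <;>
  · by_contra hc
    have h1 : x.testBit i = false ∧ y.testBit i = true := by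
      revert hi hc
      cases x.testBit i <;> cases y.testBit i <;> simp
    have := Nat.lt_of_testBit i h1.1 h1.2 (fun j hij => (agree j hij).symm)
    omega

theorem lt_iff_bits {x y : ℕ} :
    y < x ↔ ∃ z, x.testBit z = true ∧ ¬ y.testBit z = true ∧
      ∀ j, y.testBit j = true → ¬ x.testBit j = true → j < z := by
  constructor
  · intro h
    obtain ⟨z, h1, h2, h3⟩ := exists_top_diff h
    refine ⟨z, h1, h2, fun j hj hj' => ?_⟩
    rcases lt_trichotomy j z with hz | hz | hz
    · exact hz
    · subst hz; exact absurd h1 hj'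
    · rw [h3 j hz] at hj; exact absurd hj hj'
  · rintro ⟨z, h1, h2, h3⟩
    rcases lt_trichotomy y x with h | h | h
    · exact h
    · subst h; exact absurd h1 h2
    · obtain ⟨w, g1, g2, g3⟩ := exists_top_diff h
      have := h3 w g1 g2
      rw [g3 z this] at h1
      exact absurd h1 h2

/-- `F` codes a family of sets which can only be initial segments. -/
def GoodFam (n F : ℕ) : Prop :=
  ∀ u, u ≤ n → F.testBit u = true → ∀ y, y ≤ n → u.testBit y = true →
    ∀ x, x ≤ n → ¬ u.testBit x = true →
      ∃ z, z ≤ n ∧ (x.testBit z = true ∧ ¬ y.testBit z = true ∧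
        ∀ j, j ≤ n → y.testBit j = true → ¬ x.testBit j = true →
          ∃ u', u' ≤ n ∧ (F.testBit u' = true ∧ u'.testBit j = true ∧ ¬ u'.testBit z = true))

/-- Order on very small numbers. -/
def ltBase (n y x : ℕ) : Prop :=
  ∃ F, F ≤ n ∧ (GoodFam n F ∧
    ∃ u, u ≤ n ∧ (F.testBit u = true ∧ u.testBit y = true ∧ ¬ u.testBit x = true))

/-- Lifting an order on exponents to an order on numbers. -/
def ltStep (r : ℕ → ℕ → ℕ → Prop) (n y x : ℕ) : Prop :=
  ∃ z, z ≤ n ∧ (x.testBit z = true ∧ ¬ y.testBit z = true ∧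
    ∀ j, j ≤ n → y.testBit j = true → ¬ x.testBit j = true → r n j z)

theorem GoodFam.sound {n F : ℕ} (h : GoodFam n F) :
    ∀ x, ∀ y u, x ≤ n → y ≤ n → u ≤ n → F.testBit u = true → u.testBit y = true →
      ¬ u.testBit x = true → y < x := by
  intro x
  induction x using Nat.strong_induction_on with
  | _ x ih =>
    intro y u hx hy hu hF huy hux
    obtain ⟨z, hz, h1, h2, h3⟩ := h u hu hF y hy huy x hx hux
    refine lt_iff_bits.mpr ⟨z, h1, h2, fun j hj hj' => ?_⟩
    have hjn : j ≤ n := (lt_of_bit hj).le.trans hy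
    obtain ⟨u', hu', a1, a2, a3⟩ := h3 j hjn hj hj'
    exact ih z (lt_of_bit h1) j u' hz hjn hu' a1 a2 a3

/-- `r` is sound, and complete when the first argument is below `B`. -/
def Corr (r : ℕ → ℕ → ℕ → Prop) (n B : ℕ) : Prop :=
  (∀ x y, x ≤ n → y ≤ n → r n y x → y < x) ∧
  (∀ x y, x ≤ n → y ≤ n → y < B → y < x → r n y x)

theorem Corr.step {r : ℕ → ℕ → ℕ → Prop} {n B : ℕ} (h : Corr r n B) :
    Corr (ltStep r) n (2 ^ B) := by
  constructor
  · rintro x y hx hy ⟨z, hz, h1, h2, h3⟩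
    refine lt_iff_bits.mpr ⟨z, h1, h2, fun j hj hj' => ?_⟩
    have hjn : j ≤ n := (lt_of_bit hj).le.trans hy
    exact h.1 z j hz hjn (h3 j hjn hj hj')
  · intro x y hx hy hB hlt
    obtain ⟨z, h1, h2, h3⟩ := lt_iff_bits.mp hlt
    have hz : z ≤ n := (lt_of_bit h1).le.trans hx
    refine ⟨z, hz, h1, h2, fun j hjn hj hj' => ?_⟩
    refine h.2 z j hz hjn ?_ (h3 j hj hj')
    have := Nat.ge_two_pow_of_testBit hj
    exact (Nat.pow_lt_pow_iff_right (by norm_num : 1 < 2)).mp (lt_of_le_of_lt this hB)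

theorem Corr.zero (n : ℕ) : Corr ltBase n 0 := by
  constructor
  · rintro x y hx hy ⟨F, hF, hg, u, hu, h1, h2, h3⟩
    exact hg.sound x y u hx hy hu h1 h2 h3
  · intro x y _ _ h
    omega

theorem Corr.base {n B : ℕ} (hB : 2 ^ 2 ^ B ≤ n) : Corr ltBase n B := by
  classical
  refine ⟨(Corr.zero n).1, ?_⟩
  let F := Nat.ofBits (fun u : Fin (2 ^ B) => decide (∃ i, i ≤ B ∧ (u : ℕ) = 2 ^ i - 1))
  have hFn : F ≤ n := (Nat.ofBits_lt_two_pow _).le.trans hB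
  have hF : ∀ u, F.testBit u = true ↔ ∃ i, i ≤ B ∧ u = 2 ^ i - 1 := by
    intro u
    by_cases hu : u < 2 ^ B
    · rw [Nat.testBit_ofBits_lt _ _ hu]
      simp
    · rw [Nat.testBit_ofBits_ge _ _ (by omega)]
      constructor
      · intro h; simp at h
      · rintro ⟨i, hi, rfl⟩
        have := Nat.pow_le_pow_right (n := 2) (by norm_num) hi
        have := Nat.two_pow_pos i
        omega
  have hbit : ∀ i j, (2 ^ i - 1).testBit j = true ↔ j < i := by
    intro i j; simp
  have hun : ∀ u, F.testBit u = true → u ≤ n := fun u h => (lt_of_bit h).le.trans hFn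
  have hgood : GoodFam n F := by
    intro u hu hFu y hy huy x hx hux
    obtain ⟨i, hi, rfl⟩ := (hF u).mp hFu
    rw [hbit] at huy hux
    obtain ⟨z, h1, h2, h3⟩ := lt_iff_bits.mp (show y < x by omega)
    refine ⟨z, (lt_of_bit h1).le.trans hx, h1, h2, fun j hjn hj hj' => ?_⟩
    have hjz := h3 j hj hj'
    have hjy := lt_of_bit hj
    have hFu' : F.testBit (2 ^ (j + 1) - 1) = true := (hF _).mpr ⟨j + 1, by omega, rfl⟩
    refine ⟨2 ^ (j + 1) - 1, hun _ hFu', hFu', ?_, ?_⟩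
    · rw [hbit]; omega
    · rw [hbit]; omega
  intro x y hx hy hyB hlt
  have hFu : F.testBit (2 ^ (y + 1) - 1) = true := (hF _).mpr ⟨y + 1, by omega, rfl⟩
  refine ⟨F, hFn, hgood, 2 ^ (y + 1) - 1, hun _ hFu, hFu, ?_, ?_⟩
  · rw [hbit]; omega
  · rw [hbit]; omega

theorem ltStep3_iff {n y x : ℕ} (hy : y ≤ n) (hx : x ≤ n) :
    ltStep (ltStep (ltStep ltBase)) n y x ↔ y < x := by
  have key : ∃ B, Corr (ltStep (ltStep (ltStep ltBase))) n B ∧ n < B := by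
    by_cases hn : n < 4
    · exact ⟨_, (Corr.zero n).step.step.step, by norm_num; omega⟩
    · have h0 : n ≠ 0 := by omega
      have h1 : Nat.log 2 n ≠ 0 := by
        rw [Ne, Nat.log_eq_zero_iff]; omega
      have a1 := Nat.pow_log_le_self 2 h0
      have a2 := Nat.pow_log_le_self 2 h1
      have b1 := Nat.lt_pow_succ_log_self (b := 2) (by norm_num) n
      have b2 := Nat.lt_pow_succ_log_self (b := 2) (by norm_num) (Nat.log 2 n)
      generalize Nat.log 2 n = l at *
      generalize Nat.log 2 l = m at *
      refine ⟨_, (Corr.base (B := m)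
        ((Nat.pow_le_pow_right (by norm_num) a2).trans a1)).step.step.step, ?_⟩
      refine b1.trans_le (Nat.pow_le_pow_right (by norm_num) ?_)
      refine (Nat.succ_le_of_lt b2).trans (Nat.pow_le_pow_right (by norm_num) ?_)
      exact Nat.succ_le_of_lt Nat.lt_two_pow_self
  obtain ⟨B, hB, hn⟩ := key
  exact ⟨hB.1 x y hx hy, hB.2 x y hx hy (by omega)⟩

/-! ## Definability of the order from `Bit` -/

theorem bit_def : UDef₂ bitStruct (fun _ a b => a.testBit b = true) :=
  UDef₂.of_rel (L := LBit) BitRel.bit fun _ _ => Iff.rfl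

theorem ltBase_def : UDef₂ bitStruct ltBase := by
  intro α i j
  unfold ltBase GoodFam
  repeat' first
    | apply UDef.ex
    | apply UDef.all
    | apply UDef.and
    | apply UDef.not
    | apply UDef.imp
    | exact bit_def _ _ _

theorem ltStep_def {r : ℕ → ℕ → ℕ → Prop} (hr : UDef₂ bitStruct r) :
    UDef₂ bitStruct (ltStep r) := by
  intro α i j
  unfold ltStep
  repeat' first
    | apply UDef.ex
    | apply UDef.all
    | apply UDef.and
    | exact bit_def _ _ _
    | exact hr _ _ _
    | apply UDef.not
    | apply UDef.imp

theorem lt_def : UDef₂ bitStruct (fun _ a b => a < b) :=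
  (ltStep_def (ltStep_def (ltStep_def ltBase_def))).congr
    fun _ _ _ ha hb => ltStep3_iff ha hb

/-! ## The second linear order -/

/-- Reverse lexicographic order: compare at the least significant differing bit. -/
def rev (u v : ℕ) : Prop :=
  ∃ i, ¬ u.testBit i = true ∧ v.testBit i = true ∧
    ∀ j, j < i → (u.testBit j = true ↔ v.testBit j = true)

theorem rev_irrefl (u : ℕ) : ¬ rev u u := fun ⟨_, h1, h2, _⟩ => h1 h2

theorem rev_trans {u v w : ℕ} (h : rev u v) (h' : rev v w) : rev u w := by
  obtain ⟨i, a1, a2, a3⟩ := h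
  obtain ⟨j, b1, b2, b3⟩ := h'
  rcases lt_trichotomy i j with hij | hij | hij
  · exact ⟨i, a1, (b3 i hij).mp a2, fun k hk => (a3 k hk).trans (b3 k (hk.trans hij))⟩
  · subst hij; exact absurd a2 b1
  · exact ⟨j, fun h => b1 ((a3 j hij).mp h), b2,
      fun k hk => (a3 k (hk.trans hij)).trans (b3 k hk)⟩

theorem rev_asymm {u v : ℕ} (h : rev u v) : ¬ rev v u := fun h' => rev_irrefl _ (rev_trans h h')

theorem rev_total {u v : ℕ} (h : u ≠ v) : rev u v ∨ rev v u := by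
  classical
  have hex : ∃ i, ¬ (u.testBit i = true ↔ v.testBit i = true) := by
    by_contra hc
    push Not at hc
    exact h (Nat.eq_of_testBit_eq fun i => Bool.eq_iff_iff.mpr (hc i))
  have h1 := Nat.find_spec hex
  have h2 : ∀ j, j < Nat.find hex → (u.testBit j = true ↔ v.testBit j = true) :=
    fun j hj => not_not.mp (Nat.find_min hex hj)
  by_cases hu : u.testBit (Nat.find hex) = true
  · right
    exact ⟨_, fun hv => h1 ⟨fun _ => hv, fun _ => hu⟩, hu, fun j hj => (h2 j hj).symm⟩
  · left
    refine ⟨_, hu, ?_, h2⟩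
    by_contra hv
    exact h1 ⟨fun h => absurd h hu, fun h => absurd h hv⟩

theorem rev_two_pow_iff {u k : ℕ} : rev u (2 ^ k) ↔ 2 ^ (k + 1) ∣ u := by
  have hb : ∀ j, (2 ^ k).testBit j = true ↔ k = j := by
    intro j; rw [Nat.testBit_two_pow]; simp
  constructor
  · rintro ⟨i, h1, h2, h3⟩
    rw [hb] at h2
    subst h2
    apply Nat.dvd_of_mod_eq_zero
    apply Nat.eq_of_testBit_eq
    intro j
    rw [Nat.testBit_mod_two_pow, Nat.zero_testBit]
    by_cases hj : j < k + 1
    · have : ¬ u.testBit j = true := by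
        rcases Nat.lt_succ_iff_lt_or_eq.mp hj with h | h
        · rw [h3 j h, hb]; omega
        · subst h; exact h1
      simp [this]
    · simp [hj]
  · intro h
    have hz : ∀ j, j < k + 1 → ¬ u.testBit j = true := by
      intro j hj hu
      have := Nat.testBit_mod_two_pow u (k + 1) j
      rw [Nat.mod_eq_zero_of_dvd h] at this
      simp [hj, hu] at this
    refine ⟨k, hz k (by omega), by simp, fun j hj => ?_⟩
    rw [hb]
    exact ⟨fun h => absurd h (hz j (by omega)), fun h => by omega⟩

theorem rev_of_lt_two_pow {u k : ℕ} (h0 : 0 < u) (h : u < 2 ^ k) : rev (2 ^ k) u := by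
  rcases rev_total (show 2 ^ k ≠ u by omega) with h' | h'
  · exact h'
  · have := Nat.le_of_dvd h0 (rev_two_pow_iff.mp h')
    rw [pow_succ] at this
    omega

/-- The key of a number: odd numbers `x` are markers for `2 ^ x`. -/
def key (x : ℕ) : ℕ := if x % 2 = 1 then 2 ^ x else x

theorem key_odd {x : ℕ} (h : x % 2 = 1) : key x = 2 ^ x := by simp [key, h]

theorem key_even {x : ℕ} (h : ¬ x % 2 = 1) : key x = x := by simp only [key, h, if_false]

/-- The second linear order. -/
def ord2 (x y : ℕ) : Prop := rev (key x) (key y) ∨ (key x = key y ∧ y < x)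

theorem ord2_irrefl (x : ℕ) : ¬ ord2 x x := by
  rintro (h | h)
  · exact rev_irrefl _ h
  · omega

theorem ord2_trans {x y z : ℕ} (h : ord2 x y) (h' : ord2 y z) : ord2 x z := by
  rcases h with h | ⟨h, hl⟩ <;> rcases h' with h' | ⟨h', hl'⟩
  · exact Or.inl (rev_trans h h')
  · exact Or.inl (h' ▸ h)
  · exact Or.inl (h ▸ h')
  · exact Or.inr ⟨h.trans h', hl'.trans hl⟩

theorem ord2_total {x y : ℕ} (h : x ≠ y) : ord2 x y ∨ ord2 y x := by
  by_cases hk : key x = key y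
  · rcases lt_or_gt_of_ne h with hl | hl
    · exact Or.inr (Or.inr ⟨hk.symm, hl⟩)
    · exact Or.inl (Or.inr ⟨hk, hl⟩)
  · rcases rev_total hk with h' | h'
    · exact Or.inl (Or.inl h')
    · exact Or.inr (Or.inl h')

theorem ord2_asymm {x y : ℕ} (h : ord2 x y) : ¬ ord2 y x :=
  fun h' => ord2_irrefl _ (ord2_trans h h')

/-! ## Definability of the second order from `Bit` -/

theorem isZero_defB : UDef₁ bitStruct (fun _ a => a = 0) := by
  have : UDef₁ bitStruct (fun n a => ∀ z, z ≤ n → ¬ z < a) := by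
    intro α i
    exact UDef.all (UDef.not (lt_def _ _ _))
  refine this.congr fun n a ha => ⟨fun h => ?_, fun h => by omega⟩
  have := h 0 (by omega)
  omega

theorem odd_defB : UDef₁ bitStruct (fun _ a => a % 2 = 1) := by
  have : UDef₁ bitStruct (fun n a => ∃ z, z ≤ n ∧ (z = 0 ∧ a.testBit z = true)) := by
    intro α i
    exact UDef.ex (UDef.and (isZero_defB _ _) (bit_def _ _ _))
  refine this.congr fun n a ha => ?_
  simp

theorem keybit_iff {x i : ℕ} : (key x).testBit i = true ↔
    (x % 2 = 1 ∧ x = i) ∨ (¬ x % 2 = 1 ∧ x.testBit i = true) := by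
  by_cases h : x % 2 = 1
  · rw [key_odd h, Nat.testBit_two_pow]; simp [h]
  · rw [key_even h]; simp [h]

theorem keybit_le {x i : ℕ} (h : (key x).testBit i = true) : i ≤ x := by
  rcases keybit_iff.mp h with h | h
  · omega
  · exact (lt_of_bit h.2).le

theorem keybit_def : UDef₂ bitStruct (fun _ x i => (key x).testBit i = true) := by
  have : UDef₂ bitStruct (fun _ x i =>
      (x % 2 = 1 ∧ x = i) ∨ (¬ x % 2 = 1 ∧ x.testBit i = true)) := by
    intro α i j
    exact UDef.or (UDef.and (odd_defB _ _) (UDef.eq _ _))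
      (UDef.and (UDef.not (odd_defB _ _)) (bit_def _ _ _))
  exact this.congr fun n a b _ _ => keybit_iff.symm

theorem ord2_def : UDef₂ bitStruct (fun _ x y => ord2 x y) := by
  have : UDef₂ bitStruct (fun n x y =>
      (∃ i, i ≤ n ∧ (¬ (key x).testBit i = true ∧ (key y).testBit i = true ∧
        ∀ j, j ≤ n → j < i → ((key x).testBit j = true ↔ (key y).testBit j = true))) ∨
      ((∀ i, i ≤ n → ((key x).testBit i = true ↔ (key y).testBit i = true)) ∧ y < x)) := by
    intro α a b
    exact UDef.or (UDef.ex (UDef.and (UDef.not (keybit_def _ _ _)) (UDef.and (keybit_def _ _ _)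
        (UDef.all (UDef.imp (lt_def _ _ _) (UDef.iff (keybit_def _ _ _) (keybit_def _ _ _)))))))
      (UDef.and (UDef.all (UDef.iff (keybit_def _ _ _) (keybit_def _ _ _))) (lt_def _ _ _))
  refine this.congr fun n x y hx hy => or_congr ?_ (and_congr ?_ Iff.rfl)
  · constructor
    · rintro ⟨i, hi, h1, h2, h3⟩
      exact ⟨i, h1, h2, fun j hj => h3 j (by omega) hj⟩
    · rintro ⟨i, h1, h2, h3⟩
      exact ⟨i, (keybit_le h2).trans hy, h1, h2, fun j _ hj => h3 j hj⟩
  · constructor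
    · intro h
      refine Nat.eq_of_testBit_eq fun i => Bool.eq_iff_iff.mpr ?_
      by_cases hi : i ≤ n
      · exact h i hi
      · exact ⟨fun h => absurd ((keybit_le h).trans hx) hi,
          fun h => absurd ((keybit_le h).trans hy) hi⟩
    · intro h i _
      rw [h]

/-! ## Definability of `Bit` from the two orders -/

/-- Our family of structures with two orders. -/
abbrev PS : ∀ n : ℕ, LPair.Structure (Fin (n + 1)) := pairStruct ord2

theorem plt_def : UDef₂ PS (fun _ a b => a < b) :=
  UDef₂.of_rel (L := LPair) RelPair.lt fun _ _ => Iff.rfl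

theorem pord_def : UDef₂ PS (fun _ a b => ord2 a b) :=
  UDef₂.of_rel (L := LPair) RelPair.snd fun _ _ => Iff.rfl

theorem pzero_def : UDef₁ PS (fun _ a => a = 0) := by
  have : UDef₁ PS (fun n a => ∀ z, z ≤ n → ¬ z < a) := by
    intro α i
    exact UDef.all (UDef.not (plt_def _ _ _))
  refine this.congr fun n a ha => ⟨fun h => ?_, fun h => by omega⟩
  have := h 0 (by omega)
  omega

theorem key_pos {y : ℕ} (h : y ≠ 0) : 0 < key y := by
  by_cases hy : y % 2 = 1
  · rw [key_odd hy]; positivity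
  · rw [key_even hy]; omega

theorem key_lt {x y : ℕ} (h : y < x) : key y < 2 ^ x := by
  by_cases hy : y % 2 = 1
  · rw [key_odd hy]; exact Nat.pow_lt_pow_right (by norm_num) h
  · rw [key_even hy]; exact h.trans Nat.lt_two_pow_self

theorem podd_def : UDef₁ PS (fun _ a => a % 2 = 1) := by
  have : UDef₁ PS (fun n x => ¬ x = 0 ∧ ∀ y, y ≤ n → y < x → ¬ y = 0 →
      (ord2 x y ∧ ∃ z, z ≤ n ∧ (z < x ∧ ¬ z = 0 ∧ ¬ z = y))) := by
    intro α i
    exact UDef.and (UDef.not (pzero_def _ _)) (UDef.all (UDef.imp (plt_def _ _ _)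
      (UDef.imp (UDef.not (pzero_def _ _)) (UDef.and (pord_def _ _ _) (UDef.ex
        (UDef.and (plt_def _ _ _) (UDef.and (UDef.not (pzero_def _ _))
          (UDef.not (UDef.eq _ _)))))))))
  refine this.congr fun n x hx => ⟨?_, ?_⟩
  · rintro ⟨h0, h⟩
    by_contra hodd
    obtain ⟨h1, z, _, hz⟩ := h (x - 1) (by omega) (by omega) (by omega)
    have hx4 : 4 ≤ x := by omega
    refine ord2_asymm h1 (Or.inl ?_)
    rw [key_odd (by omega : (x - 1) % 2 = 1), key_even hodd]
    apply rev_of_lt_two_pow (by omega)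
    have : x - 2 < 2 ^ (x - 2) := Nat.lt_two_pow_self
    have e : 2 ^ (x - 1) = 2 * 2 ^ (x - 2) := by
      rw [← pow_succ']; congr 1; omega
    omega
  · intro hodd
    refine ⟨by omega, fun y hy hyx hy0 => ⟨Or.inl ?_, ?_⟩⟩
    · rw [key_odd hodd]
      exact rev_of_lt_two_pow (key_pos hy0) (key_lt hyx)
    · by_cases h1 : y = 1
      · exact ⟨2, by omega, by omega, by omega, by omega⟩
      · exact ⟨1, by omega, by omega, by omega, by omega⟩

theorem ord2_even_pow {y k : ℕ} (hy : ¬ y % 2 = 1) (hk : k ≠ 0) :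
    ord2 y (2 ^ k) ↔ 2 ^ (k + 1) ∣ y := by
  have hp : ¬ 2 ^ k % 2 = 1 := by
    obtain ⟨m, rfl⟩ := Nat.exists_eq_succ_of_ne_zero hk
    rw [Nat.pow_succ]; omega
  unfold ord2
  rw [key_even hy, key_even hp, rev_two_pow_iff]
  constructor
  · rintro (h | h)
    · exact h
    · omega
  · exact Or.inl

theorem two_pow_even {k : ℕ} (hk : k ≠ 0) : ¬ 2 ^ k % 2 = 1 := by
  obtain ⟨m, rfl⟩ := Nat.exists_eq_succ_of_ne_zero hk
  rw [Nat.pow_succ]; omega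

/-- Powers of two other than `1`. -/
def IsPow (p : ℕ) : Prop := ∃ k, k ≠ 0 ∧ p = 2 ^ k

theorem ppow_def : UDef₁ PS (fun _ p => IsPow p) := by
  have : UDef₁ PS (fun n p => ¬ p % 2 = 1 ∧ ¬ p = 0 ∧
      ∀ y, y ≤ n → y < p → ¬ y % 2 = 1 → ¬ y = 0 → ord2 p y) := by
    intro α i
    exact UDef.and (UDef.not (podd_def _ _)) (UDef.and (UDef.not (pzero_def _ _))
      (UDef.all (UDef.imp (plt_def _ _ _) (UDef.imp (UDef.not (podd_def _ _))
        (UDef.imp (UDef.not (pzero_def _ _)) (pord_def _ _ _))))))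
  refine this.congr fun n p hp => ⟨?_, ?_⟩
  · rintro ⟨he, h0, h⟩
    obtain ⟨k, m, hm, rfl⟩ := Nat.exists_eq_two_pow_mul_odd h0
    have hm2 : m % 2 = 1 := Nat.odd_iff.mp hm
    have hk : k ≠ 0 := by
      rintro rfl
      simp at he; omega
    refine ⟨k, hk, ?_⟩
    by_contra hne
    have hpos := Nat.two_pow_pos k
    have hlt : 2 ^ k < 2 ^ k * m := by
      have : 2 ^ k * 1 ≤ 2 ^ k * m := Nat.mul_le_mul_left _ (by omega)
      omega
    have := (ord2_even_pow he hk).mp (h (2 ^ k) (by omega) hlt (two_pow_even hk) (by omega))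
    rw [pow_succ] at this
    have := Nat.dvd_of_mul_dvd_mul_left hpos this
    omega
  · rintro ⟨k, hk, rfl⟩
    have hpos := Nat.two_pow_pos k
    refine ⟨two_pow_even hk, by omega, fun y _ hy hye hy0 => Or.inl ?_⟩
    rw [key_even (two_pow_even hk), key_even hye]
    exact rev_of_lt_two_pow (by omega) hy

/-- `p` is the power of two indexed by the odd number `x`. -/
theorem pmark_def : UDef₂ PS (fun _ x p => x % 2 = 1 ∧ p = 2 ^ x) := by
  have : UDef₂ PS (fun n x p => x % 2 = 1 ∧ (¬ p % 2 = 1 ∧ ¬ p = 0 ∧ ord2 p x ∧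
      ∀ z, z ≤ n → ¬ (ord2 p z ∧ ord2 z x))) := by
    intro α i j
    exact UDef.and (podd_def _ _) (UDef.and (UDef.not (podd_def _ _))
      (UDef.and (UDef.not (pzero_def _ _)) (UDef.and (pord_def _ _ _)
        (UDef.all (UDef.not (UDef.and (pord_def _ _ _) (pord_def _ _ _)))))))
  refine this.congr fun n x p hx hp => and_congr_right fun hodd => ⟨?_, ?_⟩
  · rintro ⟨he, h0, ho, hn⟩
    by_contra hne
    have hr : rev p (2 ^ x) := by
      rcases ho with ho | ho
      · rwa [key_even he, key_odd hodd] at ho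
      · rw [key_even he, key_odd hodd] at ho
        exact absurd ho.1 hne
    have hle := Nat.le_of_dvd (by omega) (rev_two_pow_iff.mp hr)
    have hlt : 2 ^ x < 2 ^ (x + 1) := Nat.pow_lt_pow_right (by norm_num) (by omega)
    have hxe : ¬ 2 ^ x % 2 = 1 := two_pow_even (by omega)
    refine hn (2 ^ x) (by omega) ⟨Or.inl ?_, Or.inr ⟨?_, Nat.lt_two_pow_self⟩⟩
    · rwa [key_even he, key_even hxe]
    · rw [key_even hxe, key_odd hodd]
  · rintro rfl
    have hxe : ¬ 2 ^ x % 2 = 1 := two_pow_even (by omega)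
    have hpos := Nat.two_pow_pos x
    refine ⟨hxe, by omega, Or.inr ⟨?_, Nat.lt_two_pow_self⟩, ?_⟩
    · rw [key_even hxe, key_odd hodd]
    · rintro z _ ⟨h1, h2⟩
      unfold ord2 at h1 h2
      rw [key_even hxe] at h1
      rw [key_odd hodd] at h2
      have main : key z = 2 ^ x ∧ x < z ∧ z < 2 ^ x := by
        rcases h1 with h1 | h1 <;> rcases h2 with h2 | h2
        · exact absurd h2 (rev_asymm h1)
        · rw [h2.1] at h1; exact absurd h1 (rev_irrefl _)
        · rw [h1.1] at h2; exact absurd h2 (rev_irrefl _)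
        · exact ⟨h2.1, h2.2, h1.2⟩
      by_cases hz : z % 2 = 1
      · rw [key_odd hz] at main
        have := Nat.pow_right_injective (le_refl 2) main.1
        omega
      · rw [key_even hz] at main
        omega

/-- `p = 2 ^ b` for positive exponents. -/
theorem pexp_def : UDef₂ PS (fun _ b p => b ≠ 0 ∧ p = 2 ^ b) := by
  have : UDef₂ PS (fun n b p => (b % 2 = 1 ∧ p = 2 ^ b) ∨
      (∃ x, x ≤ n ∧ (x < b ∧ (∀ z, z ≤ n → ¬ (x < z ∧ z < b)) ∧
        ∃ q, q ≤ n ∧ ((x % 2 = 1 ∧ q = 2 ^ x) ∧ IsPow p ∧ q < p ∧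
          ∀ r, r ≤ n → IsPow r → ¬ (q < r ∧ r < p))))) := by
    intro α i j
    refine UDef.or (pmark_def _ _ _) (UDef.ex (UDef.and (plt_def _ _ _) (UDef.and
      (UDef.all (UDef.not (UDef.and (plt_def _ _ _) (plt_def _ _ _)))) (UDef.ex
        (UDef.and (pmark_def _ _ _) (UDef.and (ppow_def _ _) (UDef.and (plt_def _ _ _)
          (UDef.all (UDef.imp (ppow_def _ _) (UDef.not (UDef.and (plt_def _ _ _)
            (plt_def _ _ _))))))))))))
  refine this.congr fun n b p hb hp => ⟨?_, ?_⟩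
  · rintro (⟨h1, h2⟩ | ⟨x, hx, hxb, hz, q, hq, ⟨hx1, rfl⟩, ⟨k, hk, rfl⟩, hlt, hr⟩)
    · exact ⟨by omega, h2⟩
    · have hbx : b = x + 1 := by
        have := hz (x + 1) (by omega)
        omega
      subst hbx
      refine ⟨by omega, ?_⟩
      have hxk : x < k := (Nat.pow_lt_pow_iff_right (by norm_num : 1 < 2)).mp hlt
      by_contra hne
      have hk2 : x + 1 < k := by
        rcases Nat.lt_or_ge (x + 1) k with h | h
        · exact h
        · exact absurd (by rw [show k = x + 1 by omega]) hne
      have l1 : 2 ^ x < 2 ^ (x + 1) := Nat.pow_lt_pow_right (by norm_num) (by omega)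
      have l2 : 2 ^ (x + 1) < 2 ^ k := Nat.pow_lt_pow_right (by norm_num) hk2
      exact hr (2 ^ (x + 1)) (by omega) ⟨x + 1, by omega, rfl⟩ ⟨l1, l2⟩
  · rintro ⟨hb0, rfl⟩
    by_cases hodd : b % 2 = 1
    · exact Or.inl ⟨hodd, rfl⟩
    · right
      obtain ⟨x, rfl⟩ := Nat.exists_eq_succ_of_ne_zero hb0
      have l1 : 2 ^ x < 2 ^ (x + 1) := Nat.pow_lt_pow_right (by norm_num) (by omega)
      refine ⟨x, by omega, by omega, fun z _ => by omega, 2 ^ x, by omega, ⟨by omega, rfl⟩,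
        ⟨x + 1, by omega, rfl⟩, l1, ?_⟩
      rintro r _ ⟨k, _, rfl⟩ ⟨h1, h2⟩
      have h1' := (Nat.pow_lt_pow_iff_right (by norm_num : 1 < 2)).mp h1
      have h2' := (Nat.pow_lt_pow_iff_right (by norm_num : 1 < 2)).mp h2
      omega

/-- Divisibility by the power `p`, for even numbers. -/
theorem pbit_def : UDef₂ PS (fun _ a p => ∃ k, k ≠ 0 ∧ p = 2 ^ k ∧ a.testBit k = true) := by
  have : UDef₂ PS (fun n a p => IsPow p ∧ ∃ y, y ≤ n ∧ (¬ a < y ∧ ¬ y % 2 = 1 ∧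
      ¬ ord2 y p ∧ (∀ q, q ≤ n → IsPow q → q < p → ord2 y q) ∧
      ∀ y', y' ≤ n → ¬ y' % 2 = 1 → y < y' → ¬ a < y' → ¬ ord2 y' p)) := by
    intro α i j
    exact UDef.and (ppow_def _ _) (UDef.ex (UDef.and (UDef.not (plt_def _ _ _))
      (UDef.and (UDef.not (podd_def _ _)) (UDef.and (UDef.not (pord_def _ _ _)) (UDef.and
        (UDef.all (UDef.imp (ppow_def _ _) (UDef.imp (plt_def _ _ _) (pord_def _ _ _))))
        (UDef.all (UDef.imp (UDef.not (podd_def _ _)) (UDef.imp (plt_def _ _ _)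
          (UDef.imp (UDef.not (plt_def _ _ _)) (UDef.not (pord_def _ _ _)))))))))))
  refine this.congr fun n a p ha hp => ⟨?_, ?_⟩
  · rintro ⟨⟨k, hk, rfl⟩, y, hy, hya, hye, h1, h2, h3⟩
    refine ⟨k, hk, rfl, ?_⟩
    rw [ord2_even_pow hye hk] at h1
    have hpos := Nat.two_pow_pos k
    have hdvd : 2 ^ k ∣ y := by
      obtain ⟨m, rfl⟩ := Nat.exists_eq_succ_of_ne_zero hk
      rcases Nat.eq_zero_or_pos m with rfl | hm
      · simp; omega
      · have l1 : 2 ^ m < 2 ^ (m + 1) := Nat.pow_lt_pow_right (by norm_num) (by omega)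
        exact (ord2_even_pow hye (by omega)).mp
          (h2 (2 ^ m) (by omega) ⟨m, by omega, rfl⟩ l1)
    obtain ⟨c, rfl⟩ := hdvd
    have hc : c % 2 = 1 := by
      by_contra hc
      apply h1
      rw [pow_succ]
      exact Nat.mul_dvd_mul_left _ (Nat.dvd_of_mod_eq_zero (by omega))
    have hlt : a < 2 ^ k * (c + 1) := by
      by_contra hge
      have hdv : 2 ^ (k + 1) ∣ 2 ^ k * (c + 1) := by
        rw [pow_succ]
        exact Nat.mul_dvd_mul_left _ (Nat.dvd_of_mod_eq_zero (by omega))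
      have hev : ¬ 2 ^ k * (c + 1) % 2 = 1 := by
        have : 2 ∣ 2 ^ k * (c + 1) := (dvd_pow_self 2 (by omega)).trans hdv
        omega
      exact h3 _ (by omega) hev (by rw [Nat.mul_add]; omega) hge
        ((ord2_even_pow hev hk).mpr hdv)
    rw [Nat.testBit_eq_decide_div_mod_eq]
    have hq : a / 2 ^ k = c := by
      apply Nat.div_eq_of_lt_le
      · rw [Nat.mul_comm]; omega
      · rw [Nat.mul_comm]; exact hlt
    simp [hq, hc]
  · rintro ⟨k, hk, rfl, hbit⟩
    refine ⟨⟨k, hk, rfl⟩, ?_⟩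
    have hpos := Nat.two_pow_pos k
    have hc : a / 2 ^ k % 2 = 1 := by
      rw [Nat.testBit_eq_decide_div_mod_eq] at hbit
      simpa using hbit
    have e := Nat.div_add_mod a (2 ^ k)
    have hm := Nat.mod_lt a hpos
    generalize a / 2 ^ k = c at *
    have hye : ¬ 2 ^ k * c % 2 = 1 := by
      have : 2 ∣ 2 ^ k * c := (dvd_pow_self 2 hk).trans (Nat.dvd_mul_right _ _)
      omega
    refine ⟨2 ^ k * c, by omega, by omega, hye, ?_, ?_, ?_⟩
    · rw [ord2_even_pow hye hk, pow_succ]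
      intro h
      have := Nat.dvd_of_mul_dvd_mul_left hpos h
      omega
    · rintro q _ ⟨m, hm0, rfl⟩ hlt
      have hmk := (Nat.pow_lt_pow_iff_right (by norm_num : 1 < 2)).mp hlt
      exact (ord2_even_pow hye hm0).mpr
        ((pow_dvd_pow 2 (by omega)).trans (Nat.dvd_mul_right _ _))
    · intro y' _ hy'e hlt hle h
      obtain ⟨d, rfl⟩ := (ord2_even_pow hy'e hk).mp h
      rw [pow_succ, Nat.mul_assoc] at hlt hle
      have h1 : c < 2 * d := Nat.lt_of_mul_lt_mul_left hlt
      have h2 : 2 ^ k * (c + 1) ≤ 2 ^ k * (2 * d) := Nat.mul_le_mul_left _ h1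
      rw [Nat.mul_add] at h2
      omega

theorem pBit_def : UDef₂ PS (fun _ a b => a.testBit b = true) := by
  have : UDef₂ PS (fun n a b => (b = 0 ∧ a % 2 = 1) ∨
      ∃ p, p ≤ n ∧ ((b ≠ 0 ∧ p = 2 ^ b) ∧ ∃ k, k ≠ 0 ∧ p = 2 ^ k ∧ a.testBit k = true)) := by
    intro α i j
    exact UDef.or (UDef.and (pzero_def _ _) (podd_def _ _))
      (UDef.ex (UDef.and (pexp_def _ _ _) (pbit_def _ _ _)))
  refine this.congr fun n a b ha hb => ⟨?_, ?_⟩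
  · rintro (⟨rfl, h⟩ | ⟨p, hp, ⟨hb0, rfl⟩, k, hk, he, h⟩)
    · simp [h]
    · rwa [Nat.pow_right_injective (le_refl 2) he]
  · intro h
    by_cases hb0 : b = 0
    · subst hb0
      exact Or.inl ⟨rfl, by simpa using h⟩
    · exact Or.inr ⟨2 ^ b, (Nat.ge_two_pow_of_testBit h).trans ha, ⟨hb0, rfl⟩, b, hb0, rfl, h⟩


/-- Theorem 5.2: there is a strict linear order `◁'` on `ℕ` such that
`FO(<,◁')` and `FO(Bit)` define the same relations in every finite prefix: `Bit` is
`FO(<,◁')`-definable, and both `<` and `◁'` are `FO(Bit)`-definable. -/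
theorem two_linear_orders_capture_Bit :
    ∃ ordb : ℕ → ℕ → Prop,
      (∀ x, ¬ ordb x x) ∧
      (∀ x y z, ordb x y → ordb y z → ordb x z) ∧
      (∀ x y, x ≠ y → ordb x y ∨ ordb y x) ∧
      (∃ φ : LPair.Formula (Fin 2),
        ∀ n : ℕ,
          letI := pairStruct ordb n
          ∀ a b : Fin (n + 1),
            φ.Realize ![a, b] ↔ Nat.testBit (a : ℕ) (b : ℕ) = true) ∧
      (∃ ψlt : LBit.Formula (Fin 2),
        ∀ n : ℕ,
          letI := bitStruct n
          ∀ a b : Fin (n + 1), ψlt.Realize ![a, b] ↔ (a : ℕ) < (b : ℕ)) ∧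
      (∃ ψb : LBit.Formula (Fin 2),
        ∀ n : ℕ,
          letI := bitStruct n
          ∀ a b : Fin (n + 1), ψb.Realize ![a, b] ↔ ordb (a : ℕ) (b : ℕ)) := by
  refine ⟨ord2, ord2_irrefl, fun _ _ _ => ord2_trans, fun _ _ => ord2_total, ?_, ?_, ?_⟩
  · exact pBit_def.formula
  · exact lt_def.formula
  · exact ord2_def.formula
end
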